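/- arXiv:1311.2295 — 2 statements merged into one kernel-verified Lean document; each statement's English description precedes it below -/
import Mathlib

section
/- Let m ≥ 2 be an integer, ε = exp(2πi/m), and k_1, …, k_{m-1} ∈ ℂ. Let f : ℂ → ℂ be complex-differentiable on ℂ ∖ {0} and of type j, i.e. f(εx) = ε^j f(x) for all x. Then: (1) if 1 ≤ j ≤ m-1, then T(k)f(x) = f'(x) + k_j f(x)/x for all x ≠ 0, and T(k)f is of type j-1; (2) if j ≡ 0 (mod m) (f is ε-invariant), then T(k)f = f', and T(k)f is of type m-1. In particular the complex Dunkl operator maps functions of a definite type to functions of a definite type. -/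
/-!
Iterating `f (ε x) = ε ^ j * f x` gives `f (ε ^ l x) = ε ^ (j l) * f x`, so `p_i f` is `f` times the
average of the powers of `ε ^ (j - i)`; by orthogonality of characters this is `f` if
`i ≡ j (mod m)` and `0` otherwise (`proj_of_type`). Hence at most one term of the sum defining
`T(k) f` survives, namely `i = j`. Differentiating the type relation gives
`ε * f' (ε x) = ε ^ j * f' x` (`deriv_of_type`), and dividing a function of type `j` by `x` also
lowers its type by one, which yields the type of `T(k) f`.
-/

/-- `ε = exp(2πi/m)`, a primitive `m`-th root of unity. -/
noncomputable def eps (m : ℕ) : ℂ := Complex.exp (2 * Real.pi * Complex.I / m)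

/-- The projection operator `p_i(f)(x) = (1/m) ∑_{l=0}^{m-1} ε^{-il} f(ε^l x)`. -/
noncomputable def proj (m : ℕ) (i : ℤ) (f : ℂ → ℂ) (x : ℂ) : ℂ :=
  (m : ℂ)⁻¹ * ∑ l ∈ Finset.range m, eps m ^ (-(i * l)) * f (eps m ^ l * x)

/-- The complex Dunkl operator of type `G(m,1,1)`:
`T(k)f(x) = f'(x) + (1/x) ∑_{i=1}^{m-1} k_i p_i(f)(x)`, defined for `x ≠ 0`. -/
noncomputable def dunkl (m : ℕ) (k : ℕ → ℂ) (f : ℂ → ℂ) (x : ℂ) : ℂ :=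
  deriv f x + x⁻¹ * ∑ i ∈ Finset.Icc 1 (m - 1), k i * proj m i f x

theorem eps_isPrimitiveRoot {m : ℕ} (hm : m ≠ 0) : IsPrimitiveRoot (eps m) m :=
  Complex.isPrimitiveRoot_exp m hm

theorem eps_ne_zero (m : ℕ) : eps m ≠ 0 := Complex.exp_ne_zero _

theorem type_iterate {m j : ℕ} {f : ℂ → ℂ} (hj : ∀ x : ℂ, f (eps m * x) = eps m ^ j * f x)
    (l : ℕ) (x : ℂ) : f (eps m ^ l * x) = (eps m ^ j) ^ l * f x := by
  induction l with
  | zero => simp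
  | succ l ih => rw [pow_succ', mul_assoc, hj, ih, pow_succ']; ring

theorem proj_of_type {m : ℕ} (hm : m ≠ 0) {f : ℂ → ℂ} {j : ℕ}
    (hj : ∀ x : ℂ, f (eps m * x) = eps m ^ j * f x) (i : ℤ) (x : ℂ) :
    proj m i f x = if (m : ℤ) ∣ j - i then f x else 0 := by
  have hε := eps_isPrimitiveRoot hm
  have hterm : ∀ l : ℕ, eps m ^ (-(i * l)) * f (eps m ^ l * x)
      = (eps m ^ ((j : ℤ) - i)) ^ l * f x := by
    intro l
    rw [type_iterate hj, ← mul_assoc, ← zpow_natCast (eps m ^ j), ← zpow_natCast (eps m) j,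
      ← zpow_mul, ← zpow_add₀ (eps_ne_zero m), ← zpow_natCast (eps m ^ ((j : ℤ) - i)), ← zpow_mul]
    congr 2
    ring
  simp only [proj, hterm, ← Finset.sum_mul]
  split_ifs with h
  · have hm' : (m : ℂ) ≠ 0 := Nat.cast_ne_zero.mpr hm
    simp [(hε.zpow_eq_one_iff_dvd _).mpr h, hm']
  · have h1 : eps m ^ ((j : ℤ) - i) ≠ 1 := fun h' => h ((hε.zpow_eq_one_iff_dvd _).mp h')
    have h2 : (eps m ^ ((j : ℤ) - i)) ^ m = 1 := by
      rw [← zpow_natCast, ← zpow_mul, hε.zpow_eq_one_iff_dvd]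
      exact dvd_mul_left _ _
    simp [geom_sum_eq h1, h2]

theorem deriv_of_type {m j : ℕ} {f : ℂ → ℂ} (hj : ∀ x : ℂ, f (eps m * x) = eps m ^ j * f x)
    (x : ℂ) : eps m * deriv f (eps m * x) = eps m ^ j * deriv f x := by
  have h := deriv_comp_mul_left (eps m) f x
  rw [smul_eq_mul] at h
  rw [← h, funext hj, deriv_const_mul_field]

/-- If `f` is differentiable away from `0` and of type `j` (i.e. `f(εx) = ε^j f(x)`), then:
(1) for `1 ≤ j ≤ m-1`, `T(k)f(x) = f'(x) + k_j f(x)/x` and `T(k)f` is of type `j-1`;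
(2) for `j ≡ 0 (mod m)`, `T(k)f = f'` and `T(k)f` is of type `m-1`. -/
theorem dunkl_of_type (m : ℕ) (hm : 2 ≤ m) (k : ℕ → ℂ)
    (f : ℂ → ℂ) (hf : ∀ x : ℂ, x ≠ 0 → DifferentiableAt ℂ f x)
    (j : ℕ) (hj : ∀ x : ℂ, f (eps m * x) = eps m ^ j * f x) :
    (1 ≤ j → j ≤ m - 1 →
      (∀ x : ℂ, x ≠ 0 → dunkl m k f x = deriv f x + k j * f x / x) ∧
      (∀ x : ℂ, x ≠ 0 → dunkl m k f (eps m * x) = eps m ^ (j - 1) * dunkl m k f x)) ∧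
    (j % m = 0 →
      (∀ x : ℂ, x ≠ 0 → dunkl m k f x = deriv f x) ∧
      (∀ x : ℂ, x ≠ 0 → dunkl m k f (eps m * x) = eps m ^ (m - 1) * dunkl m k f x)) := by
  have hm0 : m ≠ 0 := by omega
  have hε := eps_ne_zero m
  constructor
  · intro h1 h2
    have key : ∀ x : ℂ, dunkl m k f x = deriv f x + k j * f x / x := by
      intro x
      rw [dunkl, Finset.sum_eq_single_of_mem j (Finset.mem_Icc.mpr ⟨h1, h2⟩)]
      · rw [proj_of_type hm0 hj, if_pos (by simp)]
        ring
      · intro i hi hij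
        rw [Finset.mem_Icc] at hi
        rw [proj_of_type hm0 hj, if_neg, mul_zero]
        intro hd
        have := Int.eq_zero_of_abs_lt_dvd hd (by rw [abs_lt]; omega)
        omega
    refine ⟨fun x _ => key x, fun x hx => ?_⟩
    have hd := deriv_of_type hj x
    obtain ⟨n, rfl⟩ : ∃ n, j = n + 1 := ⟨j - 1, by omega⟩
    rw [key, key, hj, Nat.add_sub_cancel]
    have hd' : deriv f (eps m * x) = eps m ^ n * deriv f x :=
      mul_left_cancel₀ hε (by rw [hd]; ring)
    rw [hd']
    field_simp
    ring
  · intro h0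
    have key : ∀ x : ℂ, dunkl m k f x = deriv f x := by
      intro x
      rw [dunkl, Finset.sum_eq_zero, mul_zero, add_zero]
      intro i hi
      rw [Finset.mem_Icc] at hi
      rw [proj_of_type hm0 hj, if_neg, mul_zero]
      intro hd
      have hmj : (m : ℤ) ∣ j := by exact_mod_cast Nat.dvd_of_mod_eq_zero h0
      have hmi : m ∣ i := by exact_mod_cast (dvd_sub_right hmj).mp hd
      have := Nat.le_of_dvd (by omega) hmi
      omega
    refine ⟨fun x _ => key x, fun x _ => ?_⟩
    have hroot := eps_isPrimitiveRoot hm0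
    rw [key, key]
    refine mul_left_cancel₀ hε ?_
    rw [deriv_of_type hj, (hroot.pow_eq_one_iff_dvd j).mpr (Nat.dvd_of_mod_eq_zero h0),
      ← mul_assoc, mul_pow_sub_one hm0, hroot.pow_eq_one]
end

section
/- Let m ≥ 2 be an integer, κ = exp(iπ/m), ν = (ν_1, …, ν_{m-1}) ∈ ℝ^{m-1} such that k_j = mν_j + m - j ≥ 0 for all 1 ≤ j ≤ m-1 (in particular each ν_j > -1), and let λ ∈ ℂ. Define D : ℂ → ℂ by D(x) = 𝒥_{ν,m}(λx) + ∑_{j=1}^{m-1} [(κλx)^j / (m^j (ν_1+1)(ν_2+1)⋯(ν_j+1))] · 𝒥_{ν^{(j)}, m}(λx), where ν^{(j)} = (ν_1+1, …, ν_j+1, ν_{j+1}, …, ν_{m-1}) is obtained from ν by increasing its first j components by 1. Then D solves the complex Dunkl eigenvalue problem: T(k)D(x) = κλ · D(x) for all x ≠ 0, and D(0) = 1. -/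
/-- `κ = exp(iπ/m)`. -/
noncomputable def kappa (m : ℕ) : ℂ := Complex.exp (Real.pi * Complex.I / m)

/-- The normalized hyper-Bessel function with vector index `ν = (ν_1, …, ν_{m-1})`:
`𝒥_{ν,m}(x) = ∑_{n=0}^∞ (-1)^n [∏_{k=1}^{m-1} Γ(ν_k+1)/Γ(ν_k+n+1)] (x/m)^{nm}/n!`. -/
noncomputable def hyperBessel (m : ℕ) (ν : ℕ → ℝ) (x : ℂ) : ℂ :=
  ∑' n : ℕ, (-1) ^ n *
    (∏ k ∈ Finset.Icc 1 (m - 1),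
      ((Real.Gamma (ν k + 1) / Real.Gamma (ν k + n + 1) : ℝ) : ℂ)) *
    (x / m) ^ (n * m) / (Nat.factorial n : ℂ)

/-- The Dunkl kernel
`D(x) = 𝒥_{ν,m}(λx) + ∑_{j=1}^{m-1} (κλx)^j/(m^j (ν_1+1)⋯(ν_j+1)) 𝒥_{ν^{(j)},m}(λx)`,
where `ν^{(j)}` increases the first `j` components of `ν` by `1`. -/
noncomputable def dunklKernel (m : ℕ) (ν : ℕ → ℝ) (lam : ℂ) (x : ℂ) : ℂ :=
  hyperBessel m ν (lam * x) +
    ∑ j ∈ Finset.Icc 1 (m - 1),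
      (kappa m * lam * x) ^ j /
          ((m : ℂ) ^ j * ∏ i ∈ Finset.Icc 1 j, ((ν i + 1 : ℝ) : ℂ)) *
        hyperBessel m (fun i => if i ≤ j then ν i + 1 else ν i) (lam * x)

open Finset

/-! ### Coefficients -/

/-- The product of Gamma quotients in the coefficient of index `(n, j)`, with the denominators
`(ν_1+1)⋯(ν_j+1)` of the kernel already absorbed. -/
noncomputable def gammaCoeff (m : ℕ) (ν : ℕ → ℝ) (n j : ℕ) : ℝ :=
  ∏ k ∈ Icc 1 (m - 1),
    Real.Gamma (ν k + 1) / Real.Gamma (ν k + (if k ≤ j then 1 else 0) + n + 1)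

/-- The coefficient of `x ^ (n * m + j)` in the Dunkl kernel, for `j < m`. -/
noncomputable def blockCoeff (m : ℕ) (ν : ℕ → ℝ) (lam : ℂ) (n j : ℕ) : ℂ :=
  (-1) ^ n * kappa m ^ j * (lam / m) ^ (n * m + j) * (gammaCoeff m ν n j : ℂ) / (n.factorial : ℂ)

/-- The coefficient of `x ^ N` in the Dunkl kernel. -/
noncomputable def kernelCoeff (m : ℕ) (ν : ℕ → ℝ) (lam : ℂ) (N : ℕ) : ℂ :=
  blockCoeff m ν lam (N / m) (N % m)

/-- The multiplicity `k_j = m ν_j + m - j`, extended by `k_0 = 0`. -/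
noncomputable def mult (m : ℕ) (ν : ℕ → ℝ) (j : ℕ) : ℝ :=
  if j = 0 then 0 else m * ν j + m - j

lemma kappa_pow (m : ℕ) (hm : 2 ≤ m) : kappa m ^ m = -1 := by
  have : (m : ℂ) ≠ 0 := by
    have : m ≠ 0 := by omega
    exact_mod_cast this
  rw [kappa, ← Complex.exp_nat_mul, mul_div_cancel₀ _ this, Complex.exp_pi_mul_I]

lemma nu_gt (m : ℕ) (hm : 2 ≤ m) (ν : ℕ → ℝ)
    (hkpos : ∀ j, 1 ≤ j → j ≤ m - 1 → (0 : ℝ) ≤ m * ν j + m - j)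
    (j : ℕ) (h1 : 1 ≤ j) (h2 : j ≤ m - 1) : 0 < ν j + 1 := by
  have h := hkpos j h1 h2
  have hj : (1 : ℝ) ≤ j := by exact_mod_cast h1
  have hm' : (0 : ℝ) < m := by
    have : 0 < m := by omega
    exact_mod_cast this
  by_contra hc
  nlinarith

lemma gammaCoeff_zero (m : ℕ) (ν : ℕ → ℝ) (hν : ∀ j, 1 ≤ j → j ≤ m - 1 → 0 < ν j + 1) :
    gammaCoeff m ν 0 0 = 1 := by
  apply Finset.prod_eq_one
  intro k hk
  rw [Finset.mem_Icc] at hk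
  have h0 : ¬ k ≤ 0 := by omega
  have := (Real.Gamma_pos_of_pos (hν k hk.1 hk.2)).ne'
  simp [h0, this]

lemma gammaCoeff_step (m : ℕ) (ν : ℕ → ℝ) (hν : ∀ j, 1 ≤ j → j ≤ m - 1 → 0 < ν j + 1)
    (n j : ℕ) (hj : j + 1 ≤ m - 1) :
    (ν (j + 1) + n + 1) * gammaCoeff m ν n (j + 1) = gammaCoeff m ν n j := by
  have hmem : j + 1 ∈ Icc 1 (m - 1) := by simp; omega
  have hpos : 0 < ν (j + 1) + n + 1 := by
    have := hν (j + 1) (by omega) hj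
    have : (0 : ℝ) ≤ n := by positivity
    linarith
  unfold gammaCoeff
  rw [← Finset.mul_prod_erase _ _ hmem, ← Finset.mul_prod_erase _ _ hmem, ← mul_assoc]
  congr 1
  · rw [if_pos le_rfl, if_neg (by omega),
      show ν (j + 1) + 1 + n + 1 = (ν (j + 1) + n + 1) + 1 by ring, Real.Gamma_add_one hpos.ne']
    have := (Real.Gamma_pos_of_pos hpos).ne'
    rw [add_zero]
    field_simp
  · apply Finset.prod_congr rfl
    intro k hk
    have hne := (Finset.mem_erase.1 hk).1
    have : k ≤ j + 1 ↔ k ≤ j := by omega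
    simp only [this]

lemma gammaCoeff_wrap (m : ℕ) (ν : ℕ → ℝ) (n : ℕ) :
    gammaCoeff m ν (n + 1) 0 = gammaCoeff m ν n (m - 1) := by
  apply Finset.prod_congr rfl
  intro k hk
  rw [Finset.mem_Icc] at hk
  rw [if_neg (by omega), if_pos hk.2]
  congr 2
  push_cast
  ring

lemma blockCoeff_step (m : ℕ) (hm : 2 ≤ m) (ν : ℕ → ℝ) (lam : ℂ)
    (hν : ∀ j, 1 ≤ j → j ≤ m - 1 → 0 < ν j + 1) (n j : ℕ) (hj : j + 1 ≤ m - 1) :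
    ((n * m + (j + 1) + (m * ν (j + 1) + m - (j + 1)) : ℝ) : ℂ) * blockCoeff m ν lam n (j + 1)
      = kappa m * lam * blockCoeff m ν lam n j := by
  have hm0 : (m : ℂ) ≠ 0 := by
    have : m ≠ 0 := by omega
    exact_mod_cast this
  have hK : ((n * m + (j + 1) + (m * ν (j + 1) + m - (j + 1)) : ℝ) : ℂ)
      = m * ((ν (j + 1) + n + 1 : ℝ) : ℂ) := by push_cast; ring
  unfold blockCoeff
  rw [hK, ← gammaCoeff_step m ν hν n j hj, ← add_assoc, pow_succ (lam / m), pow_succ (kappa m)]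
  push_cast
  field_simp

lemma blockCoeff_wrap (m : ℕ) (hm : 2 ≤ m) (ν : ℕ → ℝ) (lam : ℂ) (n : ℕ) :
    (((n + 1) * m : ℝ) : ℂ) * blockCoeff m ν lam (n + 1) 0
      = kappa m * lam * blockCoeff m ν lam n (m - 1) := by
  have hm0 : (m : ℂ) ≠ 0 := by
    have : m ≠ 0 := by omega
    exact_mod_cast this
  have hn0 : (n : ℂ) + 1 ≠ 0 := by exact_mod_cast Nat.succ_ne_zero n
  have hf : (n.factorial : ℂ) ≠ 0 := by exact_mod_cast n.factorial_ne_zero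
  have hκ : kappa m ^ (m - 1) * kappa m = -1 := by
    rw [← pow_succ, show m - 1 + 1 = m by omega, kappa_pow m hm]
  have he : (n + 1) * m + 0 = (n * m + (m - 1)) + 1 := by
    have : m = m - 1 + 1 := by omega
    rw [add_zero, Nat.succ_mul, add_assoc, ← this]
  unfold blockCoeff
  rw [gammaCoeff_wrap, he, pow_succ (lam / m), pow_succ (-1 : ℂ), ← hκ, Nat.factorial_succ]
  push_cast
  field_simp

/-- The recursion that encodes the eigenvalue equation. -/
lemma kernelCoeff_succ (m : ℕ) (hm : 2 ≤ m) (ν : ℕ → ℝ) (lam : ℂ)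
    (hν : ∀ j, 1 ≤ j → j ≤ m - 1 → 0 < ν j + 1) (N : ℕ) :
    (((N + 1 : ℕ) + mult m ν ((N + 1) % m) : ℝ) : ℂ) * kernelCoeff m ν lam (N + 1)
      = kappa m * lam * kernelCoeff m ν lam N := by
  obtain ⟨n, j, hj, rfl⟩ : ∃ n j, j < m ∧ N = j + m * n :=
    ⟨N / m, N % m, Nat.mod_lt _ (by omega), (Nat.mod_add_div N m).symm⟩
  have hm0 : 0 < m := by omega
  have d1 : (j + m * n) / m = n := by
    rw [Nat.add_mul_div_left _ _ hm0, Nat.div_eq_of_lt hj, zero_add]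
  have d2 : (j + m * n) % m = j := by rw [Nat.add_mul_mod_self_left, Nat.mod_eq_of_lt hj]
  by_cases h : j + 1 < m
  · have e : j + m * n + 1 = (j + 1) + m * n := by ring
    have d3 : ((j + 1) + m * n) / m = n := by
      rw [Nat.add_mul_div_left _ _ hm0, Nat.div_eq_of_lt h, zero_add]
    have d4 : ((j + 1) + m * n) % m = j + 1 := by
      rw [Nat.add_mul_mod_self_left, Nat.mod_eq_of_lt h]
    unfold kernelCoeff
    rw [e, d1, d2, d3, d4, ← blockCoeff_step m hm ν lam hν n j (by omega)]
    congr 2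
    rw [mult, if_neg (by omega)]
    push_cast
    ring
  · have hjm : j = m - 1 := by omega
    have e : j + m * n + 1 = m * (n + 1) := by rw [mul_add]; omega
    unfold kernelCoeff
    rw [d1, d2, e, Nat.mul_div_cancel_left _ hm0, Nat.mul_mod_right, hjm,
      ← blockCoeff_wrap m hm ν lam n]
    congr 2
    rw [mult, if_pos rfl]
    push_cast
    ring

lemma mult_nonneg (m : ℕ) (hm : 2 ≤ m) (ν : ℕ → ℝ)
    (hkpos : ∀ j, 1 ≤ j → j ≤ m - 1 → (0 : ℝ) ≤ m * ν j + m - j) (N : ℕ) :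
    0 ≤ mult m ν (N % m) := by
  have := Nat.mod_lt N (show 0 < m by omega)
  unfold mult
  split_ifs with h
  · exact le_rfl
  · exact hkpos _ (by omega) (by omega)

lemma norm_kernelCoeff_succ (m : ℕ) (hm : 2 ≤ m) (ν : ℕ → ℝ) (lam : ℂ)
    (hkpos : ∀ j, 1 ≤ j → j ≤ m - 1 → (0 : ℝ) ≤ m * ν j + m - j) (N : ℕ) :
    (N + 1) * ‖kernelCoeff m ν lam (N + 1)‖ ≤ ‖kappa m * lam‖ * ‖kernelCoeff m ν lam N‖ := by
  have h := congrArg norm (kernelCoeff_succ m hm ν lam (nu_gt m hm ν hkpos) N)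
  rw [norm_mul, norm_mul (kappa m * lam), Complex.norm_real] at h
  rw [← h]
  have h0 := mult_nonneg m hm ν hkpos (N + 1)
  gcongr
  refine le_trans ?_ (le_abs_self _)
  push_cast
  linarith

lemma kernelCoeff_zero (m : ℕ) (ν : ℕ → ℝ) (lam : ℂ)
    (hν : ∀ j, 1 ≤ j → j ≤ m - 1 → 0 < ν j + 1) : kernelCoeff m ν lam 0 = 1 := by
  simp [kernelCoeff, blockCoeff, gammaCoeff_zero m ν hν]

lemma norm_kernelCoeff_le (m : ℕ) (hm : 2 ≤ m) (ν : ℕ → ℝ) (lam : ℂ)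
    (hkpos : ∀ j, 1 ≤ j → j ≤ m - 1 → (0 : ℝ) ≤ m * ν j + m - j) (N : ℕ) :
    ‖kernelCoeff m ν lam N‖ ≤ ‖kappa m * lam‖ ^ N / N.factorial := by
  induction N with
  | zero => simp [kernelCoeff_zero m ν lam (nu_gt m hm ν hkpos)]
  | succ N ih =>
    have h := norm_kernelCoeff_succ m hm ν lam hkpos N
    have hN : (0 : ℝ) < N + 1 := by positivity
    have h2 : ‖kernelCoeff m ν lam (N + 1)‖
        ≤ (‖kappa m * lam‖ * (‖kappa m * lam‖ ^ N / N.factorial)) / (N + 1) := by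
      rw [le_div_iff₀ hN, mul_comm]
      exact h.trans (by gcongr)
    refine h2.trans_eq ?_
    rw [Nat.factorial_succ, pow_succ]
    push_cast
    field_simp

lemma summable_norm_kernel (m : ℕ) (hm : 2 ≤ m) (ν : ℕ → ℝ) (lam : ℂ)
    (hkpos : ∀ j, 1 ≤ j → j ≤ m - 1 → (0 : ℝ) ≤ m * ν j + m - j) (R : ℝ) (hR : 0 ≤ R) :
    Summable fun N => ‖kernelCoeff m ν lam N‖ * R ^ N := by
  refine Summable.of_nonneg_of_le (fun N => by positivity) (fun N => ?_)
    (Real.summable_pow_div_factorial (‖kappa m * lam‖ * R))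
  have := norm_kernelCoeff_le m hm ν lam hkpos N
  calc _ ≤ ‖kappa m * lam‖ ^ N / N.factorial * R ^ N := by gcongr
    _ = _ := by rw [mul_pow]; ring

lemma summable_kernel (m : ℕ) (hm : 2 ≤ m) (ν : ℕ → ℝ) (lam : ℂ)
    (hkpos : ∀ j, 1 ≤ j → j ≤ m - 1 → (0 : ℝ) ≤ m * ν j + m - j) (x : ℂ) :
    Summable fun N => kernelCoeff m ν lam N * x ^ N := by
  apply Summable.of_norm
  simpa using summable_norm_kernel m hm ν lam hkpos ‖x‖ (norm_nonneg x)

/-! ### The kernel as a power series -/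

/-- The `j`-th summand of the kernel collects the powers `x ^ N` with `N ≡ j mod m`; here `j = 0`
is the leading term. -/
lemma kernel_summand (m : ℕ) (hm : 2 ≤ m) (ν : ℕ → ℝ) (lam : ℂ)
    (hν : ∀ j, 1 ≤ j → j ≤ m - 1 → 0 < ν j + 1) (x : ℂ) (j : ℕ) (hj : j < m) :
    (kappa m * lam * x) ^ j / ((m : ℂ) ^ j * ∏ i ∈ Icc 1 j, ((ν i + 1 : ℝ) : ℂ)) *
        hyperBessel m (fun i => if i ≤ j then ν i + 1 else ν i) (lam * x)
      = ∑' n : ℕ, kernelCoeff m ν lam (j + m * n) * x ^ (j + m * n) := by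
  have hm0 : 0 < m := by omega
  unfold hyperBessel
  rw [← tsum_mul_left]
  congr 1
  ext n
  have d1 : (j + m * n) / m = n := by
    rw [Nat.add_mul_div_left _ _ hm0, Nat.div_eq_of_lt hj, zero_add]
  have d2 : (j + m * n) % m = j := by rw [Nat.add_mul_mod_self_left, Nat.mod_eq_of_lt hj]
  have hne : ∏ i ∈ Icc 1 j, (ν i + 1) ≠ 0 := by
    refine Finset.prod_ne_zero_iff.2 fun i hi => ?_
    rw [Finset.mem_Icc] at hi
    exact (hν i hi.1 (by omega)).ne'
  have hG : (∏ k ∈ Icc 1 (m - 1), Real.Gamma ((if k ≤ j then ν k + 1 else ν k) + 1) /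
        Real.Gamma ((if k ≤ j then ν k + 1 else ν k) + n + 1))
      = (∏ i ∈ Icc 1 j, (ν i + 1)) * gammaCoeff m ν n j := by
    have hfil : Icc 1 j = (Icc 1 (m - 1)).filter (· ≤ j) := by
      ext i
      simp only [Finset.mem_Icc, Finset.mem_filter]
      omega
    rw [hfil, Finset.prod_filter, gammaCoeff, ← Finset.prod_mul_distrib]
    refine Finset.prod_congr rfl fun k hk => ?_
    rw [Finset.mem_Icc] at hk
    split_ifs with h
    · rw [Real.Gamma_add_one (hν k hk.1 hk.2).ne', mul_div_assoc]
    · simp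
  have hne' : ((∏ i ∈ Icc 1 j, (ν i + 1) : ℝ) : ℂ) ≠ 0 := by exact_mod_cast hne
  have hmC : (m : ℂ) ≠ 0 := by exact_mod_cast hm0.ne'
  rw [← Complex.ofReal_prod, ← Complex.ofReal_prod, hG]
  unfold kernelCoeff blockCoeff
  rw [d1, d2, Complex.ofReal_mul]
  generalize ((∏ i ∈ Icc 1 j, (ν i + 1) : ℝ) : ℂ) = P at *
  have hx : (lam * x / m) ^ (n * m) * ((kappa m * lam * x) ^ j / (m : ℂ) ^ j)
      = kappa m ^ j * (lam / m) ^ (n * m + j) * x ^ (j + m * n) := by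
    rw [← div_pow, show lam * x / m = lam / m * x by ring,
      show kappa m * lam * x / m = kappa m * (lam / m * x) by ring, mul_pow (kappa m),
      mul_assoc (kappa m ^ j), add_comm j, mul_comm m n, ← mul_pow, pow_add]
    ring
  calc _ = (-1) ^ n * ((lam * x / m) ^ (n * m) * ((kappa m * lam * x) ^ j / (m : ℂ) ^ j)) *
        (gammaCoeff m ν n j : ℂ) / (n.factorial : ℂ) := by field_simp
    _ = _ := by rw [hx]; ring

lemma dunklKernel_eq_tsum (m : ℕ) (hm : 2 ≤ m) (ν : ℕ → ℝ) (lam : ℂ)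
    (hkpos : ∀ j, 1 ≤ j → j ≤ m - 1 → (0 : ℝ) ≤ m * ν j + m - j) (x : ℂ) :
    dunklKernel m ν lam x = ∑' N, kernelCoeff m ν lam N * x ^ N := by
  have hν := nu_gt m hm ν hkpos
  have hne : NeZero m := ⟨by omega⟩
  rw [Nat.sumByResidueClasses (summable_kernel m hm ν lam hkpos x) m]
  have h1 : ∑ j : ZMod m, ∑' n : ℕ,
        kernelCoeff m ν lam (j.val + m * n) * x ^ (j.val + m * n)
      = ∑ j ∈ range m, ∑' n : ℕ, kernelCoeff m ν lam (j + m * n) * x ^ (j + m * n) := by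
    refine Finset.sum_bij (fun j _ => j.val) (fun j _ => Finset.mem_range.2 j.val_lt)
      (fun a _ b _ h => ZMod.val_injective m h) (fun b hb => ?_) (fun _ _ => rfl)
    exact ⟨(b : ZMod m), Finset.mem_univ _, ZMod.val_cast_of_lt (Finset.mem_range.1 hb)⟩
  rw [h1, Finset.sum_congr rfl fun j hj =>
    (kernel_summand m hm ν lam hν x j (Finset.mem_range.1 hj)).symm]
  have hr : range m = insert 0 (Icc 1 (m - 1)) := by
    ext i
    simp only [Finset.mem_range, Finset.mem_insert, Finset.mem_Icc]
    omega
  rw [hr, Finset.sum_insert (by simp), dunklKernel]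
  congr 1
  -- For `j = 0` the shifted index agrees with `ν` on the components that enter the product.
  simp only [pow_zero, one_mul, div_one, Finset.Icc_eq_empty_of_lt (zero_lt_one' ℕ),
    Finset.prod_empty, hyperBessel]
  congr 1
  ext n
  congr 3
  refine Finset.prod_congr rfl fun k hk => ?_
  rw [Finset.mem_Icc] at hk
  rw [if_neg (by omega)]

/-! ### The Dunkl operator on power series -/

lemma hasSum_of_eq {f g : ℕ → ℂ} {a : ℂ} (h : ∀ n, f n = g n) (hg : HasSum g a) :
    HasSum f a := by
  rwa [funext h]

/-- Orthogonality of characters: `p_i` fixes `x ^ N` if `N ≡ i mod m` and kills it otherwise. -/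
lemma sum_eps (m : ℕ) (hm : 2 ≤ m) (i N : ℕ) (hi : i < m) :
    (m : ℂ)⁻¹ * ∑ l ∈ range m, eps m ^ (-((i : ℤ) * l)) * (eps m ^ l) ^ N
      = if N % m = i then 1 else 0 := by
  have hm0 : m ≠ 0 := by omega
  have hmC : (m : ℂ) ≠ 0 := by exact_mod_cast hm0
  have hprim : IsPrimitiveRoot (eps m) m := Complex.isPrimitiveRoot_exp m hm0
  have he : eps m ≠ 0 := Complex.exp_ne_zero _
  have hterm : ∀ l ∈ range m, eps m ^ (-((i : ℤ) * l)) * (eps m ^ l) ^ N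
      = (eps m ^ ((N : ℤ) - i)) ^ l := by
    intro l _
    rw [← zpow_natCast, ← zpow_natCast, ← zpow_natCast, ← zpow_mul, ← zpow_mul, ← zpow_add₀ he]
    congr 1
    ring
  rw [Finset.sum_congr rfl hterm]
  have hiff : eps m ^ ((N : ℤ) - i) = 1 ↔ N % m = i := by
    rw [hprim.zpow_eq_one_iff_dvd, ← Nat.modEq_iff_dvd, Nat.ModEq, Nat.mod_eq_of_lt hi, eq_comm]
  split_ifs with h
  · rw [hiff.2 h]
    simp [hmC]
  · have h1 : eps m ^ ((N : ℤ) - i) ≠ 1 := fun h' => h (hiff.1 h')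
    have h2 : (eps m ^ ((N : ℤ) - i)) ^ m = 1 := by
      rw [← zpow_natCast, zpow_comm, zpow_natCast, hprim.pow_eq_one, one_zpow]
    rw [geom_sum_eq h1, h2]
    simp

lemma hasSum_proj (m : ℕ) (hm : 2 ≤ m) (a : ℕ → ℂ) (f : ℂ → ℂ)
    (hf : ∀ x, HasSum (fun N => a N * x ^ N) (f x)) (i : ℕ) (hi : i < m) (x : ℂ) :
    HasSum (fun N => (if N % m = i then 1 else 0) * (a N * x ^ N)) (proj m i f x) := by
  have h := (hasSum_sum (s := range m) fun l _ =>
    (hf (eps m ^ l * x)).mul_left (eps m ^ (-((i : ℤ) * l)))).mul_left ((m : ℂ)⁻¹)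
  refine hasSum_of_eq (fun N => ?_) h
  rw [← sum_eps m hm i N hi, mul_assoc, Finset.sum_mul]
  congr 1
  refine Finset.sum_congr rfl fun l _ => ?_
  rw [mul_pow]
  ring

lemma hasSum_mult (m : ℕ) (hm : 2 ≤ m) (ν : ℕ → ℝ) (k : ℕ → ℂ)
    (hk : ∀ j, 1 ≤ j → j ≤ m - 1 → k j = ((m * ν j + m - j : ℝ) : ℂ)) (a : ℕ → ℂ) (f : ℂ → ℂ)
    (hf : ∀ x, HasSum (fun N => a N * x ^ N) (f x)) (x : ℂ) :
    HasSum (fun N => (mult m ν (N % m) : ℂ) * (a N * x ^ N))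
      (∑ i ∈ Icc 1 (m - 1), k i * proj m i f x) := by
  have h := hasSum_sum (s := Icc 1 (m - 1)) fun i hi =>
    (hasSum_proj m hm a f hf i (by rw [Finset.mem_Icc] at hi; omega) x).mul_left (k i)
  refine hasSum_of_eq (fun N => ?_) h
  have hN := Nat.mod_lt N (show 0 < m by omega)
  simp only [ite_mul, one_mul, zero_mul, mul_ite, mul_zero, Finset.sum_ite_eq, Finset.mem_Icc]
  unfold mult
  split_ifs with h1 h2 h2
  · omega
  · simp
  · rw [hk _ h2.1 h2.2]
  · omega

/-- Termwise differentiation of the kernel. -/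
lemma hasDerivAt_kernel (m : ℕ) (hm : 2 ≤ m) (ν : ℕ → ℝ) (lam : ℂ)
    (hkpos : ∀ j, 1 ≤ j → j ≤ m - 1 → (0 : ℝ) ≤ m * ν j + m - j) (x : ℂ) :
    ∃ d, HasDerivAt (fun y => ∑' N, kernelCoeff m ν lam N * y ^ N) d x ∧
      HasSum (fun N : ℕ => kernelCoeff m ν lam N * (N * x ^ (N - 1))) d := by
  set R : ℝ := ‖x‖ + 1 with hRdef
  have hR : 0 ≤ R := by positivity
  have hu : Summable fun N : ℕ => ‖kernelCoeff m ν lam N‖ * (N * R ^ (N - 1)) := by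
    rw [← summable_nat_add_iff 1]
    refine Summable.of_nonneg_of_le (fun N => by positivity) (fun N => ?_)
      ((summable_norm_kernel m hm ν lam hkpos R hR).mul_left ‖kappa m * lam‖)
    have h := norm_kernelCoeff_succ m hm ν lam hkpos N
    calc _ = ((N + 1) * ‖kernelCoeff m ν lam (N + 1)‖) * R ^ N := by
          rw [Nat.add_sub_cancel]
          push_cast
          ring
      _ ≤ (‖kappa m * lam‖ * ‖kernelCoeff m ν lam N‖) * R ^ N := by gcongr
      _ = _ := by ring
  have hbound : ∀ (N : ℕ) (y : ℂ), y ∈ Metric.ball (0 : ℂ) R →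
      ‖kernelCoeff m ν lam N * (N * y ^ (N - 1))‖ ≤ ‖kernelCoeff m ν lam N‖ * (N * R ^ (N - 1)) := by
    intro N y hy
    rw [mem_ball_zero_iff] at hy
    rw [norm_mul, norm_mul, norm_pow, Complex.norm_natCast]
    gcongr
  have hx : x ∈ Metric.ball (0 : ℂ) R := by
    rw [mem_ball_zero_iff]
    linarith
  refine ⟨_, hasDerivAt_tsum_of_isPreconnected (t := Metric.ball 0 R) (y₀ := x) hu
    Metric.isOpen_ball (convex_ball (0 : ℂ) R).isPreconnected
    (fun N y _ => (hasDerivAt_pow N y).const_mul _) hbound hx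
    (summable_kernel m hm ν lam hkpos x) hx, ?_⟩
  exact (Summable.of_norm_bounded hu fun N => hbound N x hx).hasSum

/-- Under the condition `k_j = mν_j + m - j ≥ 0`, the Dunkl kernel `D` solves
`T(k)D(x) = κλ D(x)` for `x ≠ 0`, with `D(0) = 1`. -/
theorem dunkl_eigenvalue_problem_solution (m : ℕ) (hm : 2 ≤ m) (ν : ℕ → ℝ) (k : ℕ → ℂ)
    (hk : ∀ j, 1 ≤ j → j ≤ m - 1 → k j = ((m * ν j + m - j : ℝ) : ℂ))
    (hkpos : ∀ j, 1 ≤ j → j ≤ m - 1 → (0 : ℝ) ≤ m * ν j + m - j)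
    (lam : ℂ) :
    (∀ x : ℂ, x ≠ 0 →
      dunkl m k (dunklKernel m ν lam) x = kappa m * lam * dunklKernel m ν lam x) ∧
    dunklKernel m ν lam 0 = 1 := by
  have hν := nu_gt m hm ν hkpos
  have hD := funext (dunklKernel_eq_tsum m hm ν lam hkpos)
  have hsum : ∀ x, HasSum (fun N => kernelCoeff m ν lam N * x ^ N) (dunklKernel m ν lam x) := by
    intro x
    rw [hD]
    exact (summable_kernel m hm ν lam hkpos x).hasSum
  refine ⟨fun x hx => ?_, ?_⟩
  · obtain ⟨d, hd, hds⟩ := hasDerivAt_kernel m hm ν lam hkpos x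
    rw [← hD] at hd
    unfold dunkl
    rw [hd.deriv]
    have hT := hds.add ((hasSum_mult m hm ν k hk _ _ hsum x).mul_left x⁻¹)
    -- The constant term is annihilated by `T(k)`, so the series may start at `N = 1`.
    rw [← hasSum_nat_add_iff' 1] at hT
    have h0 : mult m ν 0 = 0 := if_pos rfl
    simp only [Finset.sum_range_one, Nat.zero_mod, h0] at hT
    refine HasSum.unique (f := fun N => kappa m * lam * (kernelCoeff m ν lam N * x ^ N)) ?_
      ((hsum x).mul_left _)
    refine hasSum_of_eq (fun N => ?_) (by simpa using hT)
    rw [← mul_assoc (kappa m * lam), ← kernelCoeff_succ m hm ν lam hν N]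
    push_cast
    rw [pow_succ]
    field_simp
  · refine (hsum 0).unique ?_
    have h := hasSum_single (f := fun N => kernelCoeff m ν lam N * (0 : ℂ) ^ N) 0
      (fun N hN => by simp [hN])
    simpa [kernelCoeff_zero m ν lam hν] using h
end
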